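/- Let d ≥ 3 and let 𝒯 be an admissible T-mesh. Let A ∈ A_p be an anchor, T ∈ 𝕋_i a T-junction with associated cell Q = ascell(T), n ∈ {0,…,N_i}, and x ∈ supp(A) ∩ S_i(n). Assume: (1) cl(T) ∩ conv(P_{i,n}(A) ∪ {x}) ≠ ∅; (2) Q_{pdir(T)} ∩ conv(A_{pdir(T)} ∪ {x_{pdir(T)}}) ≠ ∅; (3) there exists y ∈ A_{pdir(T)} with y ≠ x_{pdir(T)}. Then for every direction ℓ ≠ i with p_ℓ ≥ 1 such that v_ℓ(A) ⋈ v_ℓ(T), one has x_ℓ ∈ conv(v_ℓ(T)). -/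

import Mathlib

/-!
Put `h = ⌊(p_ℓ + 1) / 2⌋`. The local knot vectors of the anchor `A` and of the T-junction `T` both
have a central pair of knots, with exactly `h` knots on either side: the pair lies around `A_ℓ`
for the anchor, and around `T_ℓ` (around `Q_ℓ`, with the order reversed, if `ℓ` is the pointing
direction and `p_ℓ` is odd) for the T-junction.

If `x_ℓ` were to the right of all knots of `T`, then conditions (1) and (2) would produce a point
of `A_ℓ` to the left of a point of the central region of `T`, and hence place the right central
knot of the anchor weakly to the left of that of `T`. From there on the overlapping vectors
share their knots, and both have `h` more, so the knots of `T` reach at least as far right as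
those of `A`, and in particular as far as `x_ℓ`. The left side is symmetric.

For even `p_ℓ` this needs that no global knot of the anchor lies inside the interval `A_ℓ`, which
holds because an entity meeting the closure of another one is contained in it. Symmetric bisection
preserves this property since all component intervals are dyadic relative to the initial grid:
an interval contained in a bisected one either equals it or lies in one of its halves.
-/

open Set

namespace TSpline

/-- A box in `ℝ^d`, given componentwise. -/
abbrev Box (d : ℕ) := Fin d → Set ℝ

/-- The subset of `ℝ^d` determined by a box. -/
def toSet {d : ℕ} (E : Box d) : Set (Fin d → ℝ) := Set.pi Set.univ E

/-- The closed index domain `cl Ω = ∏ₖ [0, Nₖ]`. -/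
def domain {d : ℕ} (N : Fin d → ℕ) : Set (Fin d → ℝ) :=
  Set.pi Set.univ (fun k => Set.Icc (0 : ℝ) (N k))

/-- The boundary `∂Ω` of the index domain. -/
def bdryDomain {d : ℕ} (N : Fin d → ℕ) : Set (Fin d → ℝ) := frontier (domain N)

/-- A component which is an integer singleton `{n}`, `0 ≤ n ≤ Nₖ`. -/
def IsSingletonComp (Nk : ℕ) (S : Set ℝ) : Prop :=
  ∃ n : ℕ, n ≤ Nk ∧ S = {(n : ℝ)}

/-- A component which is an open interval with integer endpoints in `[0, Nₖ]`. -/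
def IsIntervalComp (Nk : ℕ) (S : Set ℝ) : Prop :=
  ∃ a b : ℕ, a < b ∧ b ≤ Nk ∧ S = Set.Ioo (a : ℝ) (b : ℝ)

/-- A mesh entity: every component is an integer singleton or an open integer interval. -/
def IsMeshEntity {d : ℕ} (N : Fin d → ℕ) (E : Box d) : Prop :=
  ∀ k, IsSingletonComp (N k) (E k) ∨ IsIntervalComp (N k) (E k)

/-- The directions in which an entity has a singleton component. -/
def singDirs {d : ℕ} (E : Box d) : Set (Fin d) := {i | ∃ r : ℝ, E i = {r}}

/-- Split all entities of `M` contained in the region `D` whose `j`-th component is `Q j`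
into the three children obtained by bisecting the `j`-th component at `m`. -/
def midSplit {d : ℕ} (M : Set (Box d)) (Q : Box d) (j : Fin d) (m : ℝ) (D : Box d) :
    Set (Box d) :=
  (M \ {E | E ∈ M ∧ (∀ k, E k ⊆ D k) ∧ E j = Q j}) ∪
  ⋃ E ∈ {E | E ∈ M ∧ (∀ k, E k ⊆ D k) ∧ E j = Q j},
    ({Function.update E j (Set.Ioo (sInf (Q j)) m),
      Function.update E j {m},
      Function.update E j (Set.Ioo m (sSup (Q j)))} : Set (Box d))

/-- One symmetric bisection of a `d`-dimensional cell with integer midpoint. -/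
def BisectStep {d : ℕ} (N : Fin d → ℕ) (M M' : Set (Box d)) : Prop :=
  ∃ Q ∈ M, ∃ j : Fin d, ∃ a b mid : ℕ,
    (∀ k, IsIntervalComp (N k) (Q k)) ∧
    Q j = Set.Ioo (a : ℝ) (b : ℝ) ∧ a + b = 2 * mid ∧
    M' = midSplit M Q j (mid : ℝ) (fun k => closure (Q k))

/-- A tensor-product mesh with integer breakpoints. -/
def IsTensorMesh {d : ℕ} (N : Fin d → ℕ) (M : Set (Box d)) : Prop :=
  ∃ G : Fin d → Finset ℕ,
    (∀ k, 0 ∈ G k ∧ N k ∈ G k ∧ ∀ n ∈ G k, n ≤ N k) ∧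
    M = {E | ∀ k, (∃ n ∈ G k, E k = {(n : ℝ)}) ∨
          (∃ a ∈ G k, ∃ b ∈ G k, a < b ∧ (∀ c ∈ G k, c ≤ a ∨ b ≤ c) ∧
            E k = Set.Ioo (a : ℝ) (b : ℝ))}

/-- A T-mesh of the index domain: a finite disjoint partition of `cl Ω` into mesh
entities, obtained from a tensor-product mesh by repeated symmetric bisections. -/
structure TMesh (d : ℕ) (N : Fin d → ℕ) where
  entities : Set (Box d)
  finite : entities.Finite
  mem_entity : ∀ E ∈ entities, IsMeshEntity N E
  union_eq : (⋃ E ∈ entities, toSet E) = domain N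
  pairwise_disjoint : ∀ E ∈ entities, ∀ F ∈ entities, E ≠ F → toSet E ∩ toSet F = ∅
  constructed : ∃ M₀ : Set (Box d), IsTensorMesh N M₀ ∧
    Relation.ReflTransGen (BisectStep N) M₀ entities

variable {d : ℕ} {N : Fin d → ℕ}

/-- `H^k`: the entities with exactly `d - k` singleton components. -/
def Hdim (T : TMesh d N) (k : ℕ) : Set (Box d) :=
  {E ∈ T.entities | (singDirs E).ncard = d - k}

/-- The `j`-orthogonal skeleton `Sk_j`. -/
def skel (T : TMesh d N) (j : Fin d) : Set (Fin d → ℝ) :=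
  ⋃ F ∈ {F ∈ Hdim T (d - 1) | ∃ r : ℝ, F j = {r}}, closure (toSet F)

/-- The valence of a `(d-2)`-dimensional entity: the number of hyperfaces in whose
boundary it lies. -/
noncomputable def valence (T : TMesh d N) (J : Box d) : ℕ :=
  {F ∈ Hdim T (d - 1) | toSet J ⊆ frontier (toSet F)}.ncard

/-- A T-junction (hanging interface). -/
def IsTJunction (T : TMesh d N) (J : Box d) : Prop :=
  J ∈ Hdim T (d - 2) ∧ ¬ toSet J ⊆ bdryDomain N ∧ valence T J < 4

/-- `TJData T J Q i j`: `Q` is an associated cell of the T-junction `J`, with orthogonal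
direction `i` and pointing direction `j`. -/
def TJData (T : TMesh d N) (J Q : Box d) (i j : Fin d) : Prop :=
  Q ∈ Hdim T d ∧ toSet J ⊆ frontier (toSet Q) ∧
  closure (toSet J) ∩ Set.pi Set.univ (fun k => frontier (Q k)) = ∅ ∧
  i ≠ j ∧ (∃ r : ℝ, J i = {r}) ∧ (∃ r : ℝ, J j = {r}) ∧
  J i ⊆ Q i ∧ J i ≠ Q i ∧ J j ⊆ frontier (Q j)

/-- `⌊(p_k + 1)/2⌋`. -/
def halfdeg (p : Fin d → ℕ) (k : Fin d) : ℕ := (p k + 1) / 2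

/-- The active region `AR_p`. -/
def activeRegion (N p : Fin d → ℕ) : Set (Fin d → ℝ) :=
  Set.pi Set.univ (fun k => Set.Icc (halfdeg p k : ℝ) ((N k : ℝ) - (halfdeg p k : ℝ)))

/-- The slice `S_k(n)`. -/
def slice (N : Fin d → ℕ) (k : Fin d) (n : ℕ) : Set (Fin d → ℝ) :=
  {x ∈ domain N | x k = (n : ℝ)}

/-- The `k`-th frame region `FR^(k)`. -/
def frameRegion (N p : Fin d → ℕ) (k : Fin d) : Set (Fin d → ℝ) :=
  {x ∈ domain N | x k ∈ Set.Icc (0 : ℝ) (halfdeg p k : ℝ) ∪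
      Set.Icc ((N k : ℝ) - (halfdeg p k : ℝ)) (N k : ℝ)}

/-- Admissibility of a T-mesh. -/
def Admissible (p : Fin d → ℕ) (T : TMesh d N) : Prop :=
  (∀ k : Fin d, ∀ J Q : Box d, ∀ i j : Fin d, IsTJunction T J → TJData T J Q i j →
      (i = k ∨ j = k) → ¬ toSet J ⊆ frameRegion N p k) ∧
  (∀ k : Fin d, ∀ n : ℕ, (n ≤ halfdeg p k ∨ (N k - halfdeg p k ≤ n ∧ n ≤ N k)) →
      slice N k n ⊆ skel T k)

/-- Anchors of degree `p`. -/
def IsAnchor (p : Fin d → ℕ) (T : TMesh d N) (A : Box d) : Prop :=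
  A ∈ T.entities ∧ toSet A ⊆ activeRegion N p ∧
  ∀ j : Fin d, (∃ r : ℝ, A j = {r}) ↔ Odd (p j)

/-- `P_{j,n}(E)`: replace the `j`-th component of `E` by `{n}`. -/
def proj {d : ℕ} (E : Box d) (j : Fin d) (n : ℕ) : Box d :=
  Function.update E j {(n : ℝ)}

/-- The global knot vector `gv_j(E)` (as a set of integer indices). -/
def gv (T : TMesh d N) (j : Fin d) (E : Box d) : Set ℕ :=
  {n | n ≤ N j ∧ toSet (proj E j n) ⊆ skel T j}

/-- `V` is a block of consecutive entries of `G`. -/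
def IsBlockOf (V G : Set ℕ) : Prop :=
  V ⊆ G ∧ V.Finite ∧ ∀ g ∈ G, ∀ a ∈ V, ∀ b ∈ V, a ≤ g → g ≤ b → g ∈ V

/-- Two knot vectors overlap (`⋈`): both occur as blocks of consecutive entries of a
common knot vector. -/
def Overlaps (V₁ V₂ : Set ℕ) : Prop :=
  ∃ W : Set ℕ, W.Finite ∧ IsBlockOf V₁ W ∧ IsBlockOf V₂ W

/-- The convex hull in `ℝ` of a set of integer indices. -/
def convOf (V : Set ℕ) : Set ℝ := convexHull ℝ ((fun n : ℕ => (n : ℝ)) '' V)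

/-- The local knot vector of an anchor `A` in direction `j`: the block of `p_j + 2`
consecutive entries of `gv_j(A)` whose entry of rank `⌊(p_j+1)/2⌋` is `inf A_j`. -/
def IsAnchorKV (T : TMesh d N) (p : Fin d → ℕ) (A : Box d) (j : Fin d) (V : Set ℕ) : Prop :=
  IsBlockOf V (gv T j A) ∧ V.ncard = p j + 2 ∧
  ∃ a : ℕ, (a : ℝ) = sInf (A j) ∧ a ∈ V ∧ {v ∈ V | v < a}.ncard = halfdeg p j

open Classical in
noncomputable def anchorKV (T : TMesh d N) (p : Fin d → ℕ) (A : Box d) (j : Fin d) :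
    Set ℕ :=
  if h : ∃ V, IsAnchorKV T p A j V then h.choose else ∅

/-- The index support of an anchor. -/
noncomputable def suppA (T : TMesh d N) (p : Fin d → ℕ) (A : Box d) : Set (Fin d → ℝ) :=
  Set.pi Set.univ (fun k => convOf (anchorKV T p A k))

/-- The local knot vector of a T-junction `J` (with associated cell `Q`, orthogonal
direction `i`, pointing direction `j`) in direction `k`. -/
def IsTJKV (T : TMesh d N) (p : Fin d → ℕ) (J Q : Box d) (i j k : Fin d) (V : Set ℕ) :
    Prop :=
  if k = i then ∃ t : ℕ, J i = {(t : ℝ)} ∧ V = {t}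
  else if k = j then
    IsBlockOf V (gv T j J) ∧ V.ncard = p j + 1 ∧
    ((Even (p j) ∧ ∃ t : ℕ, J j = {(t : ℝ)} ∧ t ∈ V ∧ {v ∈ V | v < t}.ncard = p j / 2) ∨
     (Odd (p j) ∧ ∃ a b : ℕ, (a : ℝ) = sInf (Q j) ∧ (b : ℝ) = sSup (Q j) ∧ a ∈ V ∧ b ∈ V ∧
        {v ∈ V | v < a}.ncard = p j / 2 ∧ {v ∈ V | v < b}.ncard = p j / 2 + 1))
  else
    IsBlockOf V (gv T k J) ∧ V.ncard = p k + 2 + p k % 2 ∧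
    ∃ a b : ℕ, a ∈ V ∧ b ∈ V ∧ J k = Set.Ioo (a : ℝ) (b : ℝ) ∧
      {v ∈ V | v < a}.ncard = (p k + 1) / 2 ∧ {v ∈ V | v < b}.ncard = (p k + 1) / 2 + 1

/-- Local knot vector of a T-junction, quantifying over the (unique) associated data. -/
def IsTJKVFull (T : TMesh d N) (p : Fin d → ℕ) (J : Box d) (k : Fin d) (V : Set ℕ) :
    Prop :=
  ∃ Q : Box d, ∃ i j : Fin d, TJData T J Q i j ∧ IsTJKV T p J Q i j k V

open Classical in
noncomputable def tjKV (T : TMesh d N) (p : Fin d → ℕ) (J : Box d) (k : Fin d) : Set ℕ :=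
  if h : ∃ V, IsTJKVFull T p J k V then h.choose else ∅

/-- The geometric T-junction extension `GTJ(J)`. -/
noncomputable def GTJ (T : TMesh d N) (p : Fin d → ℕ) (J : Box d) : Set (Fin d → ℝ) :=
  Set.pi Set.univ (fun k => convOf (tjKV T p J k))

/-- `J` is a T-junction with orthogonal direction `i` and pointing direction `j`. -/
def HasDirs (T : TMesh d N) (J : Box d) (i j : Fin d) : Prop :=
  IsTJunction T J ∧ ∃ Q : Box d, TJData T J Q i j

/-- Strong geometric analysis-suitability. -/
def SGAS (T : TMesh d N) (p : Fin d → ℕ) : Prop :=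
  ∀ J₁ J₂ : Box d, ∀ i₁ j₁ i₂ j₂ : Fin d,
    HasDirs T J₁ i₁ j₁ → HasDirs T J₂ i₂ j₂ → i₁ ≠ i₂ →
    GTJ T p J₁ ∩ GTJ T p J₂ = ∅

/-- Weak geometric analysis-suitability. -/
def WGAS (T : TMesh d N) (p : Fin d → ℕ) : Prop :=
  ∀ J₁ J₂ : Box d, ∀ i₁ j₁ i₂ j₂ : Fin d,
    HasDirs T J₁ i₁ j₁ → HasDirs T J₂ i₂ j₂ → i₁ ≠ i₂ → j₁ ≠ j₂ →
    GTJ T p J₁ ∩ GTJ T p J₂ = ∅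

/-- The abstract T-junction extension `ATJ_j(n)`. -/
noncomputable def ATJ (T : TMesh d N) (p : Fin d → ℕ) (j : Fin d) (n : ℕ) :
    Set (Fin d → ℝ) :=
  slice N j n ∩
  (⋃ A ∈ {A : Box d | IsAnchor p T A ∧ n ∈ gv T j A}, suppA T p A) ∩
  (⋃ A ∈ {A : Box d | IsAnchor p T A ∧ n ∉ gv T j A}, suppA T p A)

/-- `ATJ_j = ⋃ₙ ATJ_j(n)`. -/
noncomputable def ATJfull (T : TMesh d N) (p : Fin d → ℕ) (j : Fin d) :
    Set (Fin d → ℝ) :=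
  ⋃ n ∈ Set.Iic (N j), ATJ T p j n

/-- Abstract analysis-suitability. -/
def AAS (T : TMesh d N) (p : Fin d → ℕ) : Prop :=
  ∀ i j : Fin d, i ≠ j → ∀ n m : ℕ, n ≤ N i → m ≤ N j →
    ATJ T p i n ∩ ATJ T p j m = ∅

/-- Two anchors weakly partially overlap. -/
def WeakPartOverlap (T : TMesh d N) (p : Fin d → ℕ) (A₁ A₂ : Box d) : Prop :=
  ∃ ℓ : Fin d, anchorKV T p A₁ ℓ ≠ anchorKV T p A₂ ℓ ∧
    Overlaps (anchorKV T p A₁ ℓ) (anchorKV T p A₂ ℓ)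

/-- Two anchors strongly partially overlap. -/
def StrongPartOverlap (T : TMesh d N) (p : Fin d → ℕ) (A₁ A₂ : Box d) : Prop :=
  suppA T p A₁ ∩ suppA T p A₂ = ∅ ∨
  d - 1 ≤ {k : Fin d | Overlaps (anchorKV T p A₁ k) (anchorKV T p A₂ k)}.ncard

/-- Weak dual-compatibility. -/
def WDC (T : TMesh d N) (p : Fin d → ℕ) : Prop :=
  ∀ A₁ A₂ : Box d, IsAnchor p T A₁ → IsAnchor p T A₂ → A₁ ≠ A₂ →
    WeakPartOverlap T p A₁ A₂

/-- Strong dual-compatibility. -/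
def SDC (T : TMesh d N) (p : Fin d → ℕ) : Prop :=
  ∀ A₁ A₂ : Box d, IsAnchor p T A₁ → IsAnchor p T A₂ → A₁ ≠ A₂ →
    StrongPartOverlap T p A₁ A₂

/-- `Q'` is a neighboring cell of `Q` in direction `ℓ`. -/
def NeighborInDir (T : TMesh d N) (Q Q' : Box d) (ℓ : Fin d) : Prop :=
  Q' ∈ Hdim T d ∧ Q' ≠ Q ∧
  (sSup (Q ℓ) = sInf (Q' ℓ) ∨ sSup (Q' ℓ) = sInf (Q ℓ)) ∧
  ∀ k : Fin d, k ≠ ℓ → (Q k ∩ Q' k).Nonempty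

/-- Assumption A: every cell has neighbor cells in the active region in at least three
pairwise distinct directions. -/
def AssumptionA (T : TMesh d N) (p : Fin d → ℕ) : Prop :=
  ∀ Q ∈ Hdim T d, ∃ l₁ l₂ l₃ : Fin d, l₁ ≠ l₂ ∧ l₁ ≠ l₃ ∧ l₂ ≠ l₃ ∧
    ∀ l ∈ ({l₁, l₂, l₃} : Set (Fin d)),
      ∃ Q' : Box d, NeighborInDir T Q Q' l ∧ toSet Q' ⊆ activeRegion N p

/-- The extended region `D` of Algorithm `subdiv`. -/
def extendD (N p : Fin d → ℕ) (Q : Box d) (j : Fin d) : Box d := fun ℓ =>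
  closure (Q ℓ) ∪
  {x : ℝ | ℓ ≠ j ∧ sInf (Q ℓ) = (halfdeg p ℓ : ℝ) ∧
      x ∈ Set.Icc (0 : ℝ) (halfdeg p ℓ : ℝ)} ∪
  {x : ℝ | ℓ ≠ j ∧ sSup (Q ℓ) = (N ℓ : ℝ) - (halfdeg p ℓ : ℝ) ∧
      x ∈ Set.Icc ((N ℓ : ℝ) - (halfdeg p ℓ : ℝ)) (N ℓ : ℝ)}

/-- The entity set produced by Algorithm `subdiv(𝒯, Q, j)`. -/
def subdivEntities (N p : Fin d → ℕ) (M : Set (Box d)) (Q : Box d) (j : Fin d) :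
    Set (Box d) :=
  midSplit M Q j ((sInf (Q j) + sSup (Q j)) / 2) (extendD N p Q j)

open Classical in
/-- The componentwise minimal bounding box `M(E,F)`. -/
noncomputable def MBox {d : ℕ} (E F : Box d) : Box d := fun ℓ =>
  if (E ℓ ∩ F ℓ).Nonempty then E ℓ ∩ F ℓ
  else if sSup (E ℓ) ≤ sInf (F ℓ) then Set.Icc (sSup (E ℓ)) (sInf (F ℓ))
  else Set.Icc (sSup (F ℓ)) (sInf (E ℓ))

/-- `V` is the local knot vector of `E` (an anchor or a T-junction) in direction `j`. -/
def IsLocalKVOf (T : TMesh d N) (p : Fin d → ℕ) (E : Box d) (j : Fin d) (V : Set ℕ) :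
    Prop :=
  (IsAnchor p T E ∧ IsAnchorKV T p E j V) ∨
  (IsTJunction T E ∧ IsTJKVFull T p E j V)

end TSpline

namespace TSpline

section Dyadic

variable {G : Finset ℕ} {a b c f m : ℕ}

/-- `(a, b)` is the `i`-th of the `2 ^ e` equal parts of an interval `(g, g + s)` between
consecutive points of the grid `G`. The two equations say `a = g + i s / 2 ^ e` and
`b = g + (i + 1) s / 2 ^ e`, cleared of denominators. -/
def IsDyadic (G : Finset ℕ) (a b : ℕ) : Prop :=
  ∃ g s e i : ℕ, g ∈ G ∧ g + s ∈ G ∧ 0 < s ∧ (∀ c ∈ G, c ≤ g ∨ g + s ≤ c) ∧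
    g ≤ a ∧ b ≤ g + s ∧ 2 ^ e * a = 2 ^ e * g + i * s ∧ 2 ^ e * b = 2 ^ e * g + (i + 1) * s

lemma IsDyadic.of_consecutive (ha : a ∈ G) (hb : b ∈ G) (hab : a < b)
    (hgap : ∀ c ∈ G, c ≤ a ∨ b ≤ c) : IsDyadic G a b := by
  obtain ⟨s, rfl⟩ := Nat.exists_eq_add_of_lt hab
  exact ⟨a, s + 1, 0, 0, ha, hb, s.succ_pos, hgap, le_rfl, le_rfl, by simp,
    by simp [add_assoc]⟩

lemma IsDyadic.lt (h : IsDyadic G a b) : a < b := by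
  obtain ⟨g, s, e, i, -, -, hs, -, -, -, ha, hb⟩ := h
  have hlen : 2 ^ e * a < 2 ^ e * b := by
    rw [ha, hb]
    gcongr
    exact i.lt_succ_self
  exact Nat.lt_of_mul_lt_mul_left hlen

lemma IsDyadic.left_half (h : IsDyadic G a b) (hm : a + b = 2 * m) : IsDyadic G a m := by
  have hab := h.lt
  obtain ⟨g, s, e, i, hg, hgs, hs, hgap, hga, hbg, ha, hb⟩ := h
  refine ⟨g, s, e + 1, 2 * i, hg, hgs, hs, hgap, hga, by omega, ?_, ?_⟩
  · linear_combination 2 * ha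
  · linear_combination ha + hb - 2 ^ e * hm

lemma IsDyadic.right_half (h : IsDyadic G a b) (hm : a + b = 2 * m) : IsDyadic G m b := by
  have hab := h.lt
  obtain ⟨g, s, e, i, hg, hgs, hs, hgap, hga, hbg, ha, hb⟩ := h
  refine ⟨g, s, e + 1, 2 * i + 1, hg, hgs, hs, hgap, by omega, hbg, ?_, ?_⟩
  · linear_combination ha + hb - 2 ^ e * hm
  · linear_combination 2 * hb

lemma IsDyadic.eq_or_le_or_le (h : IsDyadic G a b) (h' : IsDyadic G c f) (hac : a ≤ c)
    (hfb : f ≤ b) (hm : a + b = 2 * m) : (c = a ∧ f = b) ∨ f ≤ m ∨ m ≤ c := by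
  have hab := h.lt
  have hcf := h'.lt
  obtain ⟨g, s, e, i, hg, hgs, hs, hgap, hga, hbg, ha, hb⟩ := h
  obtain ⟨g', s', e', i', hg', hgs', hs', hgap', hgc, hfg, hc, hf⟩ := h'
  obtain ⟨rfl, rfl⟩ : g' = g ∧ s' = s := by
    have := hgap g' hg'
    have := hgap (g' + s') hgs'
    have := hgap' g hg
    have := hgap' (g + s) hgs
    omega
  rcases le_or_gt e' e with hle | hlt
  · left
    have hlen : 2 ^ e' * (b - a) ≤ 2 ^ e' * (f - c) := by
      calc 2 ^ e' * (b - a) ≤ 2 ^ e * (b - a) := by gcongr; simp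
        _ = s' := by rw [Nat.mul_sub, ha, hb, add_one_mul]; omega
        _ = 2 ^ e' * (f - c) := by rw [Nat.mul_sub, hc, hf, add_one_mul]; omega
    have := Nat.le_of_mul_le_mul_left hlen (by positivity)
    omega
  · -- `m` is a multiple of the smaller length away from `g'`, so `(c, f)` cannot straddle it
    right
    obtain ⟨u, rfl⟩ := Nat.exists_eq_add_of_lt hlt
    have hmid : 2 ^ (e + u + 1) * m = 2 ^ (e + u + 1) * g' + (2 * i + 1) * 2 ^ u * s' := by
      linear_combination 2 ^ u * ha + 2 ^ u * hb - 2 ^ u * 2 ^ e * hm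
    have hpos : 0 < 2 ^ (e + u + 1) := by positivity
    rcases lt_or_ge i' ((2 * i + 1) * 2 ^ u) with hlt | hge
    · refine Or.inl (Nat.le_of_mul_le_mul_left ?_ hpos)
      rw [hf, hmid]
      gcongr
      exact hlt
    · refine Or.inr (Nat.le_of_mul_le_mul_left ?_ hpos)
      rw [hc, hmid]
      gcongr

/-- A component of a mesh entity that is an integer singleton or a dyadic interval. -/
def IsDyadicComp (G : Finset ℕ) (S : Set ℝ) : Prop :=
  (∃ n : ℕ, S = {(n : ℝ)}) ∨ ∃ a b : ℕ, IsDyadic G a b ∧ S = Ioo (a : ℝ) b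

/-- The pieces into which a bisection at `m` splits the interval `(a, b)`. -/
def bisection (a m b : ℝ) : Set (Set ℝ) := {Ioo a m, {m}, Ioo m b}

lemma IsDyadic.of_isDyadicComp (h : IsDyadicComp G (Ioo (a : ℝ) b)) (hab : a < b) :
    IsDyadic G a b := by
  have hab' : (a : ℝ) < b := Nat.cast_lt.2 hab
  rcases h with ⟨n, hn⟩ | ⟨c, f, hcf, heq⟩
  · exact absurd (hn ▸ finite_singleton _) (Ioo_infinite hab')
  · have hcf' : (c : ℝ) < f := Nat.cast_lt.2 hcf.lt
    have hinf := congrArg sInf heq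
    have hsup := congrArg sSup heq
    rw [csInf_Ioo hab', csInf_Ioo hcf', Nat.cast_inj] at hinf
    rw [csSup_Ioo hab', csSup_Ioo hcf', Nat.cast_inj] at hsup
    exact hinf ▸ hsup ▸ hcf

lemma IsDyadic.isDyadicComp_of_mem_bisection (h : IsDyadic G a b) (hm : a + b = 2 * m)
    {X : Set ℝ} (hX : X ∈ bisection a m b) : IsDyadicComp G X := by
  rcases hX with rfl | rfl | rfl
  · exact Or.inr ⟨a, m, h.left_half hm, rfl⟩
  · exact Or.inl ⟨m, rfl⟩
  · exact Or.inr ⟨m, b, h.right_half hm, rfl⟩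

lemma IsDyadicComp.subsingleton_or_subset_half {S : Set ℝ} (hS : IsDyadicComp G S)
    (h : IsDyadic G a b) (hm : a + b = 2 * m) (hsub : S ⊆ Icc (a : ℝ) b)
    (hne : S ≠ Ioo (a : ℝ) b) :
    S.Subsingleton ∨ S ⊆ Ioo (a : ℝ) m ∨ S ⊆ Ioo (m : ℝ) b := by
  rcases hS with ⟨n, rfl⟩ | ⟨c, f, hcf, rfl⟩
  · exact Or.inl subsingleton_singleton
  · have hsub' : Ioo (c : ℝ) f ⊆ Ioo (a : ℝ) b := by
      simpa only [interior_Icc] using isOpen_Ioo.subset_interior_iff.2 hsub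
    obtain ⟨hac, hfb⟩ := (Ioo_subset_Ioo_iff (Nat.cast_lt.2 hcf.lt)).1 hsub'
    rcases h.eq_or_le_or_le hcf (Nat.cast_le.1 hac) (Nat.cast_le.1 hfb) hm with
      ⟨rfl, rfl⟩ | hfm | hmc
    · exact absurd rfl hne
    · exact Or.inr (Or.inl (Ioo_subset_Ioo hac (Nat.cast_le.2 hfm)))
    · exact Or.inr (Or.inr (Ioo_subset_Ioo (Nat.cast_le.2 hmc) hfb))

end Dyadic

section Bisection

variable {a m b : ℝ} {X Y : Set ℝ}

lemma subset_Ioo_of_mem_bisection (hX : X ∈ bisection a m b) (ham : a < m) (hmb : m < b) :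
    X ⊆ Ioo a b := by
  rcases hX with rfl | rfl | rfl
  · exact Ioo_subset_Ioo_right hmb.le
  · exact singleton_subset_iff.2 ⟨ham, hmb⟩
  · exact Ioo_subset_Ioo_left ham.le

lemma subsingleton_or_subset_half_of_mem_bisection (hX : X ∈ bisection a m b) :
    X.Subsingleton ∨ X ⊆ Ioo a m ∨ X ⊆ Ioo m b := by
  rcases hX with rfl | rfl | rfl
  · exact Or.inr (Or.inl subset_rfl)
  · exact Or.inl subsingleton_singleton
  · exact Or.inr (Or.inr subset_rfl)

lemma subset_closure_of_mem_bisection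
    (hX : X.Subsingleton ∨ X ⊆ Ioo a m ∨ X ⊆ Ioo m b) (hY : Y ∈ bisection a m b)
    (hXY : (X ∩ closure Y).Nonempty) : X ⊆ closure Y := by
  obtain ⟨z, hzX, hzY⟩ := hXY
  have hIic : ∀ {t : ℝ}, z ∈ closure (Ioo t m) → z ≤ m := fun hz =>
    (closure_minimal Ioo_subset_Icc_self isClosed_Icc hz).2
  have hIci : ∀ {t : ℝ}, z ∈ closure (Ioo m t) → m ≤ z := fun hz =>
    (closure_minimal Ioo_subset_Icc_self isClosed_Icc hz).1
  rcases hX with hX | hX | hX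
  · intro w hw
    rwa [hX hw hzX]
  · rcases hY with rfl | rfl | rfl
    · exact hX.trans subset_closure
    · exact absurd (closure_singleton.subset hzY) (hX hzX).2.ne
    · exact absurd (hIci hzY) (hX hzX).2.not_ge
  · rcases hY with rfl | rfl | rfl
    · exact absurd (hIic hzY) (hX hzX).1.not_ge
    · exact absurd (closure_singleton.subset hzY) (hX hzX).1.ne'
    · exact hX.trans subset_closure

end Bisection

section Mesh

variable {G : Finset ℕ} {S X Y : Set ℝ}

/-- A component admitted by `IsTensorMesh`: a point of the grid `G` or the open interval
between two consecutive ones. -/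
def IsGridComp (G : Finset ℕ) (S : Set ℝ) : Prop :=
  (∃ n ∈ G, S = {(n : ℝ)}) ∨
    ∃ a ∈ G, ∃ b ∈ G, a < b ∧ (∀ c ∈ G, c ≤ a ∨ b ≤ c) ∧ S = Ioo (a : ℝ) b

lemma IsGridComp.isDyadicComp (h : IsGridComp G S) : IsDyadicComp G S := by
  rcases h with ⟨n, -, rfl⟩ | ⟨a, ha, b, hb, hab, hgap, rfl⟩
  · exact Or.inl ⟨n, rfl⟩
  · exact Or.inr ⟨a, b, .of_consecutive ha hb hab hgap, rfl⟩

lemma IsGridComp.subset_closure (hX : IsGridComp G X) (hY : IsGridComp G Y)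
    (hXY : (X ∩ closure Y).Nonempty) : X ⊆ closure Y := by
  obtain ⟨z, hzX, hzY⟩ := hXY
  rcases hX with ⟨n, -, rfl⟩ | ⟨a, -, b, -, -, hgap, rfl⟩
  · rwa [singleton_subset_iff, ← mem_singleton_iff.1 hzX]
  rcases hY with ⟨n, hn, rfl⟩ | ⟨c, hc, f, hf, hcf, -, rfl⟩
  · rw [closure_singleton, mem_singleton_iff] at hzY
    subst hzY
    rcases hgap n hn with hna | hbn
    · exact absurd (Nat.cast_le.2 hna) hzX.1.not_ge
    · exact absurd (Nat.cast_le.2 hbn) hzX.2.not_ge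
  · have hcf' : (c : ℝ) ≠ f := Nat.cast_injective.ne hcf.ne
    rw [closure_Ioo hcf'] at hzY ⊢
    have hca : c ≤ a := (hgap c hc).resolve_right fun h =>
      (hzX.2.trans_le ((Nat.cast_le.2 h).trans hzY.1)).false
    have hbf : b ≤ f := (hgap f hf).resolve_left fun h =>
      (hzX.1.trans_le (hzY.2.trans (Nat.cast_le.2 h))).false
    exact Ioo_subset_Icc_self.trans (Icc_subset_Icc (Nat.cast_le.2 hca) (Nat.cast_le.2 hbf))

variable {d : ℕ} {N : Fin d → ℕ} {H : Fin d → Finset ℕ} {M M' : Set (Box d)}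

/-- The invariant of symmetric bisection behind the geometry of T-meshes: all components are
dyadic over the initial grid `H`, and an entity that meets the closure of another one is
contained in it. -/
structure IsDyadicMesh (H : Fin d → Finset ℕ) (M : Set (Box d)) : Prop where
  isDyadicComp : ∀ E ∈ M, ∀ k, IsDyadicComp (H k) (E k)
  subset_closure : ∀ E ∈ M, ∀ F ∈ M, (∀ k, (E k ∩ closure (F k)).Nonempty) →
    ∀ k, E k ⊆ closure (F k)

lemma IsTensorMesh.exists_isDyadicMesh (hM : IsTensorMesh N M) :
    ∃ H, IsDyadicMesh H M := by
  obtain ⟨H, -, rfl⟩ := hM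
  exact ⟨H, fun E hE k => IsGridComp.isDyadicComp (hE k),
    fun E hE F hF hEF k => IsGridComp.subset_closure (hE k) (hF k) (hEF k)⟩

lemma exists_of_mem_midSplit {Q D E' : Box d} {j : Fin d} {a m b : ℝ}
    (hQ : Q j = Ioo a b) (hab : a < b) (hE' : E' ∈ midSplit M Q j m D) :
    (E' ∈ M ∧ ¬((∀ k, E' k ⊆ D k) ∧ E' j = Ioo a b)) ∨
      ∃ E ∈ M, (∀ k, E k ⊆ D k) ∧ E j = Ioo a b ∧
        ∃ X ∈ bisection a m b, E' = Function.update E j X := by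
  rw [midSplit, hQ, csInf_Ioo hab, csSup_Ioo hab] at hE'
  rcases hE' with ⟨hM, hnot⟩ | hE'
  · exact Or.inl ⟨hM, fun h => hnot ⟨hM, h⟩⟩
  · obtain ⟨E, ⟨hM, hD, hj⟩, hE'⟩ := mem_iUnion₂.1 hE'
    refine Or.inr ⟨E, hM, hD, hj, ?_⟩
    rcases hE' with rfl | rfl | rfl
    exacts [⟨_, Or.inl rfl, rfl⟩, ⟨_, Or.inr (Or.inl rfl), rfl⟩, ⟨_, Or.inr (Or.inr rfl), rfl⟩]

lemma exists_parent_of_mem_midSplit {Q D E' : Box d} {j : Fin d} {a m b : ℝ}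
    (hQ : Q j = Ioo a b) (ham : a < m) (hmb : m < b) (hE' : E' ∈ midSplit M Q j m D) :
    ∃ E ∈ M, ∀ k, E' k ⊆ E k := by
  rcases exists_of_mem_midSplit hQ (ham.trans hmb) hE' with
    ⟨hM, -⟩ | ⟨E, hM, -, hj, X, hX, rfl⟩
  · exact ⟨E', hM, fun _ => subset_rfl⟩
  · refine ⟨E, hM, update_le_self_iff.2 ?_⟩
    exact hj ▸ subset_Ioo_of_mem_bisection hX ham hmb

section MidSplit

variable {Q E F : Box d} {j : Fin d} {a m b : ℕ}

lemma IsDyadicMesh.isDyadicComp_of_mem_midSplit (hM : IsDyadicMesh H M) {D : Box d}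
    (hj : Q j = Ioo (a : ℝ) b) (hab : a < b) (hm : a + b = 2 * m)
    (hE : E ∈ midSplit M Q j m D) (k : Fin d) : IsDyadicComp (H k) (E k) := by
  rcases exists_of_mem_midSplit hj (Nat.cast_lt.2 hab) hE with
    ⟨hEM, -⟩ | ⟨E, hEM, -, hEj, X, hX, rfl⟩
  · exact hM.isDyadicComp E hEM k
  · rcases eq_or_ne k j with rfl | hk
    · have hdyadic := IsDyadic.of_isDyadicComp (hEj ▸ hM.isDyadicComp E hEM k) hab
      simpa only [Function.update_self] using hdyadic.isDyadicComp_of_mem_bisection hm hX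
    · simpa only [Function.update_of_ne hk] using hM.isDyadicComp E hEM k

lemma IsDyadicMesh.subsingleton_or_subset_half_of_mem_midSplit (hM : IsDyadicMesh H M)
    (hQ : Q ∈ M) (hj : Q j = Ioo (a : ℝ) b) (hab : a < b) (hm : a + b = 2 * m)
    (hE : E ∈ midSplit M Q j m fun k => closure (Q k)) (hsub : ∀ k, E k ⊆ closure (Q k)) :
    (E j).Subsingleton ∨ E j ⊆ Ioo (a : ℝ) m ∨ E j ⊆ Ioo (m : ℝ) b := by
  have hab' : (a : ℝ) < b := Nat.cast_lt.2 hab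
  rcases exists_of_mem_midSplit hj hab' hE with ⟨hEM, hnot⟩ | ⟨E, -, -, -, X, hX, rfl⟩
  · have hdyadic := IsDyadic.of_isDyadicComp (hj ▸ hM.isDyadicComp Q hQ j) hab
    have hEj : E j ⊆ Icc (a : ℝ) b := (hsub j).trans_eq (by rw [hj, closure_Ioo hab'.ne])
    exact (hM.isDyadicComp E hEM j).subsingleton_or_subset_half hdyadic hm hEj
      fun h => hnot ⟨hsub, h⟩
  · rw [Function.update_self]
    exact subsingleton_or_subset_half_of_mem_bisection hX

lemma IsDyadicMesh.midSplit (hM : IsDyadicMesh H M) (hQ : Q ∈ M)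
    (hj : Q j = Ioo (a : ℝ) b) (hab : a < b) (hm : a + b = 2 * m) :
    IsDyadicMesh H (midSplit M Q j m fun k => closure (Q k)) := by
  have ham : (a : ℝ) < m := Nat.cast_lt.2 (by omega)
  have hmb : (m : ℝ) < b := Nat.cast_lt.2 (by omega)
  refine ⟨fun E hE => hM.isDyadicComp_of_mem_midSplit hj hab hm hE, fun E hE F hF hEF => ?_⟩
  obtain ⟨E₀, hE₀, hEE₀⟩ := exists_parent_of_mem_midSplit hj ham hmb hE
  have hsub : ∀ F₀ ∈ M, (∀ k, F k ⊆ F₀ k) → ∀ k, E k ⊆ closure (F₀ k) :=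
    fun F₀ hF₀ hFF₀ k => (hEE₀ k).trans <| hM.subset_closure E₀ hE₀ F₀ hF₀
      (fun k => (hEF k).mono (inter_subset_inter (hEE₀ k) (closure_mono (hFF₀ k)))) k
  rcases exists_of_mem_midSplit hj (ham.trans hmb) hF with
    ⟨hFM, -⟩ | ⟨F₀, hF₀, hF₀Q, hF₀j, Y, hY, rfl⟩
  · exact hsub F hFM fun _ => subset_rfl
  have hEF₀ := hsub F₀ hF₀ <| update_le_self_iff.2 <|
    hF₀j ▸ subset_Ioo_of_mem_bisection hY ham hmb
  intro k
  rcases eq_or_ne k j with rfl | hk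
  · have hEQ : ∀ l, E l ⊆ closure (Q l) := fun l =>
      (hEF₀ l).trans (closure_minimal (hF₀Q l) isClosed_closure)
    have hEFk := hEF k
    rw [Function.update_self] at hEFk ⊢
    exact subset_closure_of_mem_bisection
      (hM.subsingleton_or_subset_half_of_mem_midSplit hQ hj hab hm hE hEQ) hY hEFk
  · rw [Function.update_of_ne hk]
    exact hEF₀ k

lemma IsDyadicMesh.bisectStep (hM : IsDyadicMesh H M) (hstep : BisectStep N M M') :
    IsDyadicMesh H M' := by
  obtain ⟨Q, hQ, j, a, b, m, hcell, hj, hm, rfl⟩ := hstep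
  obtain ⟨c, f, hcf, -, hQcf⟩ := hcell j
  have hne : (Ioo (a : ℝ) b).Nonempty := hj ▸ hQcf ▸ nonempty_Ioo.2 (Nat.cast_lt.2 hcf)
  exact hM.midSplit hQ hj (Nat.cast_lt.1 (nonempty_Ioo.1 hne)) hm

end MidSplit

lemma TMesh.exists_isDyadicMesh (T : TMesh d N) : ∃ H, IsDyadicMesh H T.entities := by
  obtain ⟨M₀, htensor, hsteps⟩ := T.constructed
  obtain ⟨H, hM₀⟩ := htensor.exists_isDyadicMesh
  refine ⟨H, ?_⟩
  generalize T.entities = M at hsteps ⊢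
  induction hsteps with
  | refl => exact hM₀
  | tail _ hstep ih => exact ih.bisectStep hstep

lemma TMesh.subset_closure (T : TMesh d N) {E F : Box d} (hE : E ∈ T.entities)
    (hF : F ∈ T.entities) (hEF : (toSet E ∩ closure (toSet F)).Nonempty) (k : Fin d) :
    E k ⊆ closure (F k) := by
  obtain ⟨H, hH⟩ := T.exists_isDyadicMesh
  obtain ⟨z, hzE, hzF⟩ := hEF
  rw [toSet, closure_pi_set] at hzF
  exact hH.subset_closure E hE F hF
    (fun l => ⟨z l, hzE l (mem_univ l), hzF l (mem_univ l)⟩) k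

lemma IsMeshEntity.nonempty {E : Box d} (hE : IsMeshEntity N E) (k : Fin d) :
    (E k).Nonempty := by
  rcases hE k with ⟨n, -, hn⟩ | ⟨a, b, hab, -, hab'⟩
  · exact hn ▸ singleton_nonempty _
  · exact hab' ▸ nonempty_Ioo.2 (Nat.cast_lt.2 hab)

lemma subsingleton_of_mem_gv {T : TMesh d N} {A : Box d} {l : Fin d} {γ : ℕ}
    (hA : A ∈ T.entities) (hγ : γ ∈ gv T l A) (hmem : (γ : ℝ) ∈ A l) :
    (A l).Subsingleton := by
  have hproj : proj A l γ ≤ A := update_le_self_iff.2 (singleton_subset_iff.2 hmem)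
  obtain ⟨z, hz⟩ : (toSet (proj A l γ)).Nonempty := univ_pi_nonempty_iff.2 <|
    (Function.forall_update_iff A fun _ S => S.Nonempty).2
      ⟨singleton_nonempty _, fun k _ => (T.mem_entity A hA).nonempty k⟩
  obtain ⟨F, ⟨hF, r, hr⟩, hzF⟩ := mem_iUnion₂.1 (hγ.2 hz)
  have hsub := T.subset_closure hA hF.1 ⟨z, pi_mono (fun k _ => hproj k) hz, hzF⟩ l
  rw [hr, closure_singleton] at hsub
  exact subsingleton_singleton.anti hsub

end Mesh

section Counting

variable {ι : Type*} [LinearOrder ι] {U V : Set ι} {a b u v w : ι}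

lemma ncard_lt_add_one_add_ncard_gt (hV : V.Finite) (ha : a ∈ V) :
    {v ∈ V | v < a}.ncard + 1 + {v ∈ V | a < v}.ncard = V.ncard := by
  have hunion : insert a {v ∈ V | v < a} ∪ {v ∈ V | a < v} = V := by
    ext v
    have := lt_trichotomy v a
    grind
  have hdisj : Disjoint (insert a {v ∈ V | v < a}) {v ∈ V | a < v} :=
    disjoint_left.2 (by grind)
  rw [← ncard_insert_of_notMem (fun h => h.2.false) (hV.sep _),
    ← ncard_union_eq hdisj ((hV.sep _).insert a) (hV.sep _), hunion]

lemma exists_next_of_ncard_gt_eq_succ {h : ℕ} (hV : V.Finite)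
    (hcard : {v ∈ V | a < v}.ncard = h + 1) :
    ∃ b ∈ V, a < b ∧ (∀ v ∈ V, a < v → b ≤ v) ∧ {v ∈ V | b < v}.ncard = h := by
  have hfin : {v ∈ V | a < v}.Finite := hV.sep _
  have hne : {v ∈ V | a < v}.Nonempty := nonempty_of_ncard_ne_zero (by omega)
  obtain ⟨b, ⟨hbV, hab⟩, hmin⟩ := exists_min_image _ id hfin hne
  have hinsert : {v ∈ V | a < v} = insert b {v ∈ V | b < v} := by
    ext v
    have := hmin v
    grind
  rw [hinsert, ncard_insert_of_notMem (fun h => h.2.false) (hV.sep _)] at hcard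
  exact ⟨b, hbV, hab, fun v hv hav => hmin v ⟨hv, hav⟩, by omega⟩

lemma le_of_lt_of_ncard_lt_eq_succ (hV : V.Finite) (ha : a ∈ V) (hab : a < b)
    (hcard : {v ∈ V | v < b}.ncard = {v ∈ V | v < a}.ncard + 1) (hv : v ∈ V) (hav : a < v) :
    b ≤ v := by
  have hinsert : insert a {v ∈ V | v < a} = {v ∈ V | v < b} := by
    refine eq_of_subset_of_ncard_le (by grind) ?_ (hV.sep _)
    rw [hcard, ncard_insert_of_notMem (fun h => h.2.false) (hV.sep _)]
  by_contra! hvb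
  have hmem : v ∈ insert a {v ∈ V | v < a} := hinsert ▸ ⟨hv, hvb⟩
  exact hmem.elim hav.ne' fun h => hav.not_gt h.2

/-- If `V` ended before `w`, its elements above `v` would form a proper subset of the elements
of `U` above `u`. -/
lemma exists_ge_of_ncard_gt_le (hU : U.Finite)
    (hconv : ∀ a ∈ U, ∀ b ∈ U, ∀ g ∈ V, a ≤ g → g ≤ b → g ∈ U) (hu : u ∈ U) (hv : v ∈ V)
    (huv : u ≤ v) (hcard : {w ∈ U | u < w}.ncard ≤ {w ∈ V | v < w}.ncard) (hw : w ∈ U) :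
    ∃ v' ∈ V, w ≤ v' := by
  by_contra! hlt
  have hssub : {w ∈ V | v < w} ⊂ {w ∈ U | u < w} := by
    refine ssubset_iff_of_subset (fun g hg => ?_) |>.2
      ⟨w, ⟨hw, huv.trans_lt (hlt v hv)⟩, fun hwV => (hlt w hwV.1).false⟩
    have hug := huv.trans_lt hg.2
    exact ⟨hconv u hu w hw g hg.1 hug.le (hlt g hg.1).le, hug⟩
  exact (ncard_lt_ncard hssub (hU.sep _)).not_ge hcard

lemma exists_le_of_ncard_lt_le (hU : U.Finite)
    (hconv : ∀ a ∈ U, ∀ b ∈ U, ∀ g ∈ V, a ≤ g → g ≤ b → g ∈ U) (hu : u ∈ U) (hv : v ∈ V)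
    (hvu : v ≤ u) (hcard : {w ∈ U | w < u}.ncard ≤ {w ∈ V | w < v}.ncard) (hw : w ∈ U) :
    ∃ v' ∈ V, v' ≤ w :=
  exists_ge_of_ncard_gt_le (ι := ιᵒᵈ) hU
    (fun a ha b hb g hg hag hgb => hconv b hb a ha g hg hgb hag) hu hv hvu hcard hw

end Counting

section ConvexHull

lemma apply_mem_convexHull_image {R κ : Type*} {M : κ → Type*} [Semiring R] [PartialOrder R]
    [∀ k, AddCommMonoid (M k)] [∀ k, Module R (M k)] {S : Set (∀ k, M k)} {y : ∀ k, M k}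
    (hy : y ∈ convexHull R S) (k : κ) : y k ∈ convexHull R ((fun x => x k) '' S) := by
  have := mem_image_of_mem (LinearMap.proj (R := R) (φ := M) k) hy
  rwa [LinearMap.image_convexHull] at this

variable {𝕜 : Type*} [Field 𝕜] [LinearOrder 𝕜] [IsStrictOrderedRing 𝕜] {s : Set 𝕜} {x z : 𝕜}

lemma convexHull_eq_upperClosure_inter_lowerClosure (s : Set 𝕜) :
    convexHull 𝕜 s = ↑(upperClosure s) ∩ ↑(lowerClosure s) := by
  refine (convexHull_min (fun x hx => ?_) ?_).antisymm ?_
  · exact ⟨subset_upperClosure hx, subset_lowerClosure hx⟩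
  · exact ((upperClosure s).upper.ordConnected.inter (lowerClosure s).lower.ordConnected).convex
  · rintro x ⟨⟨a, ha, hax⟩, b, hb, hxb⟩
    exact (convex_convexHull 𝕜 s).ordConnected.out (subset_convexHull 𝕜 s ha)
      (subset_convexHull 𝕜 s hb) ⟨hax, hxb⟩

lemma exists_ge_of_mem_convexHull_union_singleton (hz : z ∈ convexHull 𝕜 (s ∪ {x}))
    (hxz : x < z) : ∃ y ∈ s, z ≤ y := by
  rw [convexHull_eq_upperClosure_inter_lowerClosure] at hz
  obtain ⟨-, y, hy | rfl, hzy⟩ := hz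
  exacts [⟨y, hy, hzy⟩, absurd hzy hxz.not_ge]

lemma exists_le_of_mem_convexHull_union_singleton (hz : z ∈ convexHull 𝕜 (s ∪ {x}))
    (hzx : z < x) : ∃ y ∈ s, y ≤ z := by
  rw [convexHull_eq_upperClosure_inter_lowerClosure] at hz
  obtain ⟨⟨y, hy | rfl, hyz⟩, -⟩ := hz
  exacts [⟨y, hy, hyz⟩, absurd hyz hzx.not_ge]

end ConvexHull

section Overlap

variable {U V : Set ℕ} {h α γ c c' : ℕ} {x : ℝ}

lemma mem_convOf_iff : x ∈ convOf V ↔ (∃ v ∈ V, (v : ℝ) ≤ x) ∧ ∃ v ∈ V, x ≤ v := by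
  simp only [convOf, convexHull_eq_upperClosure_inter_lowerClosure, mem_inter_iff,
    SetLike.mem_coe, mem_upperClosure, mem_lowerClosure, exists_mem_image]

lemma Overlaps.symm (hov : Overlaps U V) : Overlaps V U :=
  let ⟨W, hW, hU, hV⟩ := hov
  ⟨W, hW, hV, hU⟩

lemma Overlaps.finite_left (hov : Overlaps U V) : U.Finite :=
  let ⟨_, _, hU, _⟩ := hov
  hU.2.1

lemma Overlaps.mem_of_le_of_le (hov : Overlaps U V) {a b g : ℕ} (ha : a ∈ U) (hb : b ∈ U)
    (hg : g ∈ V) (hag : a ≤ g) (hgb : g ≤ b) : g ∈ U :=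
  let ⟨_, _, hU, hV⟩ := hov
  hU.2.2 g (hV.1 hg) a ha b hb hag hgb

lemma Overlaps.le_of_lt (hov : Overlaps U V) {a b g : ℕ} (ha : a ∈ U) (hb : b ∈ U)
    (hgap : ∀ u ∈ U, a < u → b ≤ u) (hg : g ∈ V) (hag : a < g) : b ≤ g := by
  by_contra! hgb
  exact hgb.not_ge (hgap g (hov.mem_of_le_of_le ha hb hg hag.le hgb.le) hag)

/-- `b` is the knot of `V` with `h` knots to its left and `c` the one with `h` knots to its
right. They coincide when `V` has `2 h + 1` knots, and `c < b` when it has `2 h` knots. -/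
structure IsCentralPair (V : Set ℕ) (h b c : ℕ) : Prop where
  left_mem : b ∈ V
  right_mem : c ∈ V
  ncard_lt : {v ∈ V | v < b}.ncard = h
  ncard_gt : {v ∈ V | c < v}.ncard = h

lemma mem_convOf_of_overlaps (hov : Overlaps U V) (hU : IsCentralPair U h α γ)
    (hV : IsCentralPair V h c c') (hright : (∀ v ∈ V, (v : ℝ) < x) → γ ≤ c')
    (hleft : (∀ v ∈ V, x < v) → c ≤ α) (hx : x ∈ convOf U) : x ∈ convOf V := by
  rw [mem_convOf_iff] at hx ⊢
  obtain ⟨⟨u, hu, hux⟩, w, hw, hxw⟩ := hx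
  have hconv : ∀ a ∈ U, ∀ b ∈ U, ∀ g ∈ V, a ≤ g → g ≤ b → g ∈ U :=
    fun _ ha _ hb _ hg => hov.mem_of_le_of_le ha hb hg
  constructor
  · by_contra! hlt
    obtain ⟨v, hv, hvu⟩ := exists_le_of_ncard_lt_le hov.finite_left hconv hU.left_mem
      hV.left_mem (hleft hlt) (hU.ncard_lt.trans_le hV.ncard_lt.ge) hu
    exact (hlt v hv).not_ge ((Nat.cast_le.2 hvu).trans hux)
  · by_contra! hlt
    obtain ⟨v, hv, hwv⟩ := exists_ge_of_ncard_gt_le hov.finite_left hconv hU.right_mem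
      hV.right_mem (hright hlt) (hU.ncard_gt.trans_le hV.ncard_gt.ge) hw
    exact (hlt v hv).not_ge (hxw.trans (Nat.cast_le.2 hwv))

end Overlap

section LocalKnots

variable {d : ℕ} {N p : Fin d → ℕ} {T : TMesh d N} {A J Q : Box d} {i k ℓ : Fin d}
  {U V : Set ℕ} {x z : ℝ}

lemma isAnchorKV_anchorKV (hx : x ∈ convOf (anchorKV T p A ℓ)) :
    IsAnchorKV T p A ℓ (anchorKV T p A ℓ) := by
  unfold anchorKV at hx ⊢
  split_ifs at hx ⊢ with h
  · exact h.choose_spec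
  · simp [convOf] at hx

lemma IsAnchorKV.exists_isCentralPair_of_odd (hU : IsAnchorKV T p A ℓ U) (hA : IsAnchor p T A)
    (hodd : Odd (p ℓ)) : ∃ α : ℕ, A ℓ = {(α : ℝ)} ∧ IsCentralPair U (halfdeg p ℓ) α α := by
  obtain ⟨⟨-, hfin, -⟩, hcard, α, hα, hαU, hlt⟩ := hU
  obtain ⟨r, hr⟩ := (hA.2.2 ℓ).2 hodd
  rw [hr, csInf_singleton] at hα
  have := ncard_lt_add_one_add_ncard_gt hfin hαU
  obtain ⟨q, hq⟩ := hodd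
  refine ⟨α, hα ▸ hr, hαU, hαU, hlt, ?_⟩
  rw [halfdeg] at hlt ⊢
  omega

lemma IsAnchorKV.exists_isCentralPair_of_even (hU : IsAnchorKV T p A ℓ U) (hA : IsAnchor p T A)
    (heven : Even (p ℓ)) : ∃ α γ : ℕ, IsCentralPair U (halfdeg p ℓ) α γ ∧
      (∀ u ∈ U, α < u → γ ≤ u) ∧ A ℓ ⊆ Ioo (α : ℝ) γ := by
  obtain ⟨⟨hsub, hfin, -⟩, hcard, α, hα, hαU, hlt⟩ := hU
  obtain ⟨γ, hγU, hαγ, hgap, hgt⟩ : ∃ γ ∈ U, α < γ ∧ (∀ u ∈ U, α < u → γ ≤ u) ∧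
      {u ∈ U | γ < u}.ncard = halfdeg p ℓ := by
    refine exists_next_of_ncard_gt_eq_succ hfin ?_
    have := ncard_lt_add_one_add_ncard_gt hfin hαU
    obtain ⟨q, hq⟩ := heven
    rw [halfdeg] at hlt ⊢
    omega
  refine ⟨α, γ, ⟨hαU, hγU, hlt, hgt⟩, hgap, ?_⟩
  have hnot : ¬∃ r : ℝ, A ℓ = {r} := fun h => Nat.not_odd_iff_even.2 heven ((hA.2.2 ℓ).1 h)
  rcases T.mem_entity A hA.1 ℓ with ⟨n, -, hn⟩ | ⟨a, b, hab, -, hAab⟩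
  · exact absurd ⟨_, hn⟩ hnot
  have hab' : (a : ℝ) < b := Nat.cast_lt.2 hab
  rw [hAab, csInf_Ioo hab', Nat.cast_inj] at hα
  subst hα
  rw [hAab]
  refine Ioo_subset_Ioo_right (le_of_not_gt fun hγb => hnot ?_)
  have hγA : (γ : ℝ) ∈ A ℓ := hAab ▸ ⟨Nat.cast_lt.2 hαγ, hγb⟩
  exact ⟨γ, (subsingleton_of_mem_gv hA.1 (hsub hγU) hγA).eq_singleton_of_mem hγA⟩

lemma IsAnchorKV.exists_isCentralPair (hU : IsAnchorKV T p A ℓ U) (hA : IsAnchor p T A)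
    (hov : Overlaps U V) : ∃ α γ : ℕ, IsCentralPair U (halfdeg p ℓ) α γ ∧
      (∀ y ∈ A ℓ, ∀ v ∈ V, y ≤ v → γ ≤ v) ∧ ∀ y ∈ A ℓ, ∀ v ∈ V, (v : ℝ) ≤ y → v ≤ α := by
  rcases (p ℓ).even_or_odd with heven | hodd
  · obtain ⟨α, γ, hcentral, hgap, hAsub⟩ := hU.exists_isCentralPair_of_even hA heven
    refine ⟨α, γ, hcentral, fun y hy v hv hyv => ?_, fun y hy v hv hvy => ?_⟩
    · exact hov.le_of_lt hcentral.left_mem hcentral.right_mem hgap hv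
        (Nat.cast_lt.1 ((hAsub hy).1.trans_le hyv))
    · refine le_of_not_gt fun hαv => (hvy.trans_lt (hAsub hy).2).not_ge ?_
      exact Nat.cast_le.2 (hov.le_of_lt hcentral.left_mem hcentral.right_mem hgap hv hαv)
  · obtain ⟨α, hα, hcentral⟩ := hU.exists_isCentralPair_of_odd hA hodd
    rw [hα]
    refine ⟨α, α, hcentral, ?_, ?_⟩ <;> rintro _ rfl v - <;> exact Nat.cast_le.1

lemma IsTJKV.exists_isCentralPair_of_even (hV : IsTJKV T p J Q i k k V) (hki : k ≠ i)
    (heven : Even (p k)) : ∃ t : ℕ, J k = {(t : ℝ)} ∧ IsCentralPair V (halfdeg p k) t t := by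
  rw [IsTJKV, if_neg hki, if_pos rfl] at hV
  obtain ⟨⟨-, hfin, -⟩, hcard, ⟨-, t, ht, htV, hlt⟩ | ⟨hodd, -⟩⟩ := hV
  · have := ncard_lt_add_one_add_ncard_gt hfin htV
    obtain ⟨q, hq⟩ := heven
    exact ⟨t, ht, htV, htV, by rw [halfdeg]; omega, by rw [halfdeg]; omega⟩
  · exact absurd heven (Nat.not_even_iff_odd.2 hodd)

lemma IsTJKV.exists_isCentralPair_of_odd (hV : IsTJKV T p J Q i k k V) (hki : k ≠ i)
    (hQ : Q ∈ T.entities) (hodd : Odd (p k)) : ∃ a b : ℕ, Q k = Ioo (a : ℝ) b ∧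
      IsCentralPair V (halfdeg p k) b a ∧ ∀ v ∈ V, a < v → b ≤ v := by
  rw [IsTJKV, if_neg hki, if_pos rfl] at hV
  obtain ⟨⟨-, hfin, -⟩, hcard, ⟨heven, -⟩ | ⟨-, a, b, ha, hb, haV, hbV, hlta, hltb⟩⟩ := hV
  · exact absurd heven (Nat.not_even_iff_odd.2 hodd)
  rcases T.mem_entity Q hQ k with ⟨n, -, hn⟩ | ⟨a', b', hab, -, hQk⟩
  · rw [hn, csInf_singleton, Nat.cast_inj] at ha
    rw [hn, csSup_singleton, Nat.cast_inj] at hb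
    subst ha hb
    omega
  have hab' : (a' : ℝ) < b' := Nat.cast_lt.2 hab
  rw [hQk, csInf_Ioo hab', Nat.cast_inj] at ha
  rw [hQk, csSup_Ioo hab', Nat.cast_inj] at hb
  subst ha hb
  have := ncard_lt_add_one_add_ncard_gt hfin haV
  obtain ⟨q, hq⟩ := hodd
  exact ⟨a, b, hQk, ⟨hbV, haV, by rw [halfdeg]; omega, by rw [halfdeg]; omega⟩,
    fun v hv => le_of_lt_of_ncard_lt_eq_succ hfin haV hab (by omega) hv⟩

lemma IsTJKV.exists_isCentralPair_of_ne (hV : IsTJKV T p J Q i k ℓ V) (hℓi : ℓ ≠ i)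
    (hℓk : ℓ ≠ k) : ∃ a b : ℕ, J ℓ = Ioo (a : ℝ) b ∧ IsCentralPair V (halfdeg p ℓ) a b := by
  rw [IsTJKV, if_neg hℓi, if_neg hℓk] at hV
  obtain ⟨⟨-, hfin, -⟩, hcard, a, b, haV, hbV, hJ, hlta, hltb⟩ := hV
  have := ncard_lt_add_one_add_ncard_gt hfin hbV
  exact ⟨a, b, hJ, haV, hbV, hlta, by rw [halfdeg]; omega⟩

variable {c c' : ℕ}

lemma IsAnchorKV.mem_convOf_of_mem_Icc (hU : IsAnchorKV T p A ℓ U) (hA : IsAnchor p T A)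
    (hov : Overlaps U V) (hV : IsCentralPair V (halfdeg p ℓ) c c') (hz : z ∈ Icc (c : ℝ) c')
    (hzA : z ∈ convexHull ℝ (A ℓ ∪ {x})) (hx : x ∈ convOf U) : x ∈ convOf V := by
  obtain ⟨α, γ, hcentral, hγ, hα⟩ := hU.exists_isCentralPair hA hov
  refine mem_convOf_of_overlaps hov hcentral hV (fun hlt => ?_) (fun hlt => ?_) hx
  · obtain ⟨y, hy, hyz⟩ := exists_le_of_mem_convexHull_union_singleton hzA
      (hz.2.trans_lt (hlt c' hV.right_mem))
    exact hγ y hy c' hV.right_mem (hyz.trans hz.2)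
  · obtain ⟨y, hy, hzy⟩ := exists_ge_of_mem_convexHull_union_singleton hzA
      ((hlt c hV.left_mem).trans_le hz.1)
    exact hα y hy c hV.left_mem (hz.1.trans hzy)

lemma IsAnchorKV.mem_convOf_of_mem_Ioo (hU : IsAnchorKV T p A ℓ U) (hA : IsAnchor p T A)
    (hodd : Odd (p ℓ)) (hov : Overlaps U V) (hV : IsCentralPair V (halfdeg p ℓ) c c')
    (hgap : ∀ v ∈ V, c' < v → c ≤ v) (hz : z ∈ Ioo (c' : ℝ) c)
    (hzA : z ∈ convexHull ℝ (A ℓ ∪ {x})) (hx : x ∈ convOf U) : x ∈ convOf V := by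
  obtain ⟨α, hα, hcentral⟩ := hU.exists_isCentralPair_of_odd hA hodd
  have hgapU : c' < α → c ≤ α :=
    hov.symm.le_of_lt hV.right_mem hV.left_mem hgap hcentral.left_mem
  refine mem_convOf_of_overlaps hov hcentral hV (fun hlt => ?_) (fun hlt => ?_) hx
  · obtain ⟨y, hy, hyz⟩ := exists_le_of_mem_convexHull_union_singleton hzA
      (hz.2.trans (hlt c hV.left_mem))
    rw [hα, mem_singleton_iff] at hy
    have hαc : α < c := Nat.cast_lt.1 (hy ▸ hyz.trans_lt hz.2)
    exact le_of_not_gt fun h => (hgapU h).not_gt hαc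
  · obtain ⟨y, hy, hzy⟩ := exists_ge_of_mem_convexHull_union_singleton hzA
      ((hlt c' hV.right_mem).trans hz.1)
    rw [hα, mem_singleton_iff] at hy
    exact hgapU (Nat.cast_lt.1 (hy ▸ hz.1.trans_le hzy))

lemma exists_mem_closure_mem_convexHull {n : ℕ} {x : Fin d → ℝ}
    (h : (closure (toSet J) ∩ convexHull ℝ (toSet (proj A i n) ∪ {x})).Nonempty) (hℓ : ℓ ≠ i) :
    ∃ z ∈ closure (J ℓ), z ∈ convexHull ℝ (A ℓ ∪ {x ℓ}) := by
  obtain ⟨z, hzJ, hzA⟩ := h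
  rw [toSet, closure_pi_set] at hzJ
  refine ⟨z ℓ, hzJ ℓ (mem_univ ℓ), convexHull_mono ?_ (apply_mem_convexHull_image hzA ℓ)⟩
  rw [image_union, image_singleton]
  refine union_subset_union_left _ (image_subset_iff.2 fun y hy => ?_)
  simpa only [mem_preimage, proj, Function.update_of_ne hℓ] using hy ℓ (mem_univ ℓ)

theorem conditions_imply_x_in_gtj_component_general (hA : IsAnchor p T A)
    (hdata : TJData T J Q i k) {n : ℕ} {x : Fin d → ℝ} (hx : x ∈ suppA T p A)
    (h1 : (closure (toSet J) ∩ convexHull ℝ (toSet (proj A i n) ∪ {x})).Nonempty)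
    (h2 : (Q k ∩ convexHull ℝ (A k ∪ {x k})).Nonempty) (hℓ : ℓ ≠ i)
    (hV : IsTJKV T p J Q i k ℓ V) (hov : Overlaps (anchorKV T p A ℓ) V) :
    x ℓ ∈ convOf V := by
  have hxℓ : x ℓ ∈ convOf (anchorKV T p A ℓ) := hx ℓ (mem_univ ℓ)
  have hU := isAnchorKV_anchorKV hxℓ
  obtain ⟨z, hzJ, hzA⟩ := exists_mem_closure_mem_convexHull h1 hℓ
  rcases ne_or_eq ℓ k with hℓk | rfl
  · obtain ⟨a, b, hJ, hcentral⟩ := hV.exists_isCentralPair_of_ne hℓ hℓk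
    have hz : z ∈ Icc (a : ℝ) b :=
      closure_minimal Ioo_subset_Icc_self isClosed_Icc (hJ ▸ hzJ)
    exact hU.mem_convOf_of_mem_Icc hA hov hcentral hz hzA hxℓ
  rcases (p ℓ).even_or_odd with heven | hodd
  · obtain ⟨t, hJ, hcentral⟩ := hV.exists_isCentralPair_of_even hℓ heven
    have hz : z ∈ Icc (t : ℝ) t := by rwa [hJ, closure_singleton, ← Icc_self] at hzJ
    exact hU.mem_convOf_of_mem_Icc hA hov hcentral hz hzA hxℓ
  · obtain ⟨a, b, hQ, hcentral, hgap⟩ := hV.exists_isCentralPair_of_odd hℓ hdata.1.1 hodd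
    obtain ⟨w, hwQ, hwA⟩ := h2
    exact hU.mem_convOf_of_mem_Ioo hA hodd hov hcentral hgap (hQ ▸ hwQ) hwA hxℓ

end LocalKnots

end TSpline

/-- If `x ∈ supp(A) ∩ S_i(n)` and a T-junction `T ∈ 𝕋_i` with
associated cell `Q` and pointing direction `k` satisfies conditions (1)-(3), then for
every direction `ℓ ≠ i` with `p_ℓ ≥ 1` in which the local knot vectors of `A` and `T`
overlap, `x_ℓ` lies in the convex hull of the `ℓ`-th local knot vector of `T`. -/
theorem TSpline.conditions_imply_x_in_gtj_component
    {d : ℕ} {N p : Fin d → ℕ} (hd : 3 ≤ d) (T : TSpline.TMesh d N)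
    (hadm : TSpline.Admissible p T)
    (A : TSpline.Box d) (hA : TSpline.IsAnchor p T A)
    (J Q : TSpline.Box d) (i k : Fin d)
    (hJ : TSpline.IsTJunction T J) (hdata : TSpline.TJData T J Q i k)
    (n : ℕ) (hn : n ≤ N i)
    (x : Fin d → ℝ)
    (hx : x ∈ TSpline.suppA T p A ∩ TSpline.slice N i n)
    (h1 : (closure (TSpline.toSet J) ∩
        convexHull ℝ (TSpline.toSet (TSpline.proj A i n) ∪ {x})).Nonempty)
    (h2 : (Q k ∩ convexHull ℝ (A k ∪ {x k})).Nonempty)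
    (h3 : ∃ y ∈ A k, y ≠ x k) :
    ∀ ℓ : Fin d, ℓ ≠ i → 1 ≤ p ℓ →
      ∀ V : Set ℕ, TSpline.IsTJKV T p J Q i k ℓ V →
        TSpline.Overlaps (TSpline.anchorKV T p A ℓ) V →
        x ℓ ∈ TSpline.convOf V :=
  fun _ hℓ _ _ hV hov =>
    TSpline.conditions_imply_x_in_gtj_component_general hA hdata hx.1 h1 h2 hℓ hV hov
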